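/- In the hypersurface setting of the context, let φ : S[x] → K[[t]] be an arc in X = V(f) through the closed point such that φ(z_j) = u_j g′(t) for all j = 1,…,d, where the u_j are units of K[[t]] and g′ ∈ K[[t]] has t-adic order L ≥ 1, and assume the restriction φ^{(d)} of φ to S is diagonal-generic for G_X^{(d)}, i.e. ord(G^{(1)}_{X_0,φ^{(d)}}) = L · ord(G_X^{(d)}). If ord(φ) = ord_t(φ(x)), then r_{X,φ}/ord(φ) = ord(G_X^{(d)}) = 1. -/

import Mathlib

open Polynomial
open scoped ENNReal

noncomputable section

namespace NashMult

/-- The `m`-adic order `ν(f)` of an element `f` of a ring: the largest `n` with `f ∈ m ^ n`. -/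
def adicOrder {R : Type*} [CommRing R] (m : Ideal R) (f : R) : ℕ :=
  sSup {n : ℕ | f ∈ m ^ n}

/-- A subalgebra `G ⊆ R[W]` is *graded* if it is spanned by its "monomials", i.e. it is closed
under taking homogeneous components.  This is the condition expressing that `G = ⊕ I_l W^l`
for a family of ideals `I_l` (with `I_0 = R` and `I_i · I_j ⊆ I_{i+j}` automatic). -/
def Graded {R : Type*} [CommRing R] (G : Subalgebra R (Polynomial R)) : Prop :=
  ∀ p ∈ G, ∀ n : ℕ, (C (p.coeff n) * X ^ n : Polynomial R) ∈ G

/-- A *Rees algebra* over `R`: a finitely generated graded subalgebra of `R[W]`. -/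
def IsReesAlgebra {R : Type*} [CommRing R] (G : Subalgebra R (Polynomial R)) : Prop :=
  G.FG ∧ Graded G

/-- The order of (the Rees algebra) `G` at the closed point of the local ring `(R, m)`:
`ord(G) = inf { ν(f)/n : f W^n a homogeneous element of G, n ≥ 1, f ≠ 0 }`
(with value `∞` for the empty infimum). -/
def reesOrder {R : Type*} [CommRing R] (m : Ideal R) (G : Subalgebra R (Polynomial R)) : ℝ≥0∞ :=
  sInf {q : ℝ≥0∞ | ∃ (f : R) (n : ℕ), f ≠ 0 ∧ 1 ≤ n ∧ (C f * X ^ n : Polynomial R) ∈ G ∧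
    q = (adicOrder m f : ℝ≥0∞) / (n : ℝ≥0∞)}

/-- `G = ⊕ I_l W^l` is *differentially closed* relative to a family `D` of derivations if
`I_{l+1} ⊆ I_l` and `D_j (I_l) ⊆ I_{l-1}` for all `l ≥ 1` and all `j`. -/
def DiffClosed {k R ι : Type*} [CommRing k] [CommRing R] [Algebra k R]
    (D : ι → Derivation k R R) (G : Subalgebra R (Polynomial R)) : Prop :=
  (∀ (f : R) (l : ℕ), 1 ≤ l → (C f * X ^ (l + 1) : Polynomial R) ∈ G →
      (C f * X ^ l : Polynomial R) ∈ G) ∧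
  (∀ (f : R) (l : ℕ) (j : ι), (C f * X ^ (l + 1) : Polynomial R) ∈ G →
      (C (D j f) * X ^ l : Polynomial R) ∈ G)

/-- `Diff(M)`: the smallest graded differentially closed subalgebra of `R[W]` containing the
set `M`. -/
def diffClosure {k R ι : Type*} [CommRing k] [CommRing R] [Algebra k R]
    (D : ι → Derivation k R R) (M : Set (Polynomial R)) : Subalgebra R (Polynomial R) :=
  sInf {G : Subalgebra R (Polynomial R) | M ⊆ ↑G ∧ Graded G ∧ DiffClosed D G}

/-- The image `ψ(G)` of a Rees algebra `G` over `R` under a homomorphism (arc) `ψ : R → K⟦t⟧`: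
the Rees algebra over `K⟦t⟧` generated by all `ψ(g) W^l` for `g W^l` a homogeneous element of
`G` with `ψ(g) ≠ 0`. -/
def arcImage {R A : Type*} [CommRing R] [CommRing A] (ψ : R → A)
    (G : Subalgebra R (Polynomial R)) : Subalgebra A (Polynomial A) :=
  Algebra.adjoin A {p : Polynomial A | ∃ (g : R) (l : ℕ),
    (C g * X ^ l : Polynomial R) ∈ G ∧ ψ g ≠ 0 ∧ p = C (ψ g) * X ^ l}

/-- The order `ord(ψ)` of an arc `ψ : R → K⟦t⟧`: the largest `n` such that
`ψ(m) ⊆ t^n` (`t` being the ideal `tI`). -/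
def homOrd {R A : Type*} [CommRing R] [CommRing A] (m : Ideal R) (tI : Ideal A)
    (ψ : R → A) : ℕ :=
  sSup {n : ℕ | ∀ s ∈ m, ψ s ∈ tI ^ n}

/-- The maximal ideal `(t)` of `K⟦t⟧`. -/
def tId (K : Type*) [CommRing K] : Ideal (PowerSeries K) :=
  Ideal.span {(PowerSeries.X : PowerSeries K)}

/-- The `t`-adic order on `K⟦t⟧`. -/
def tOrd {K : Type*} [CommRing K] (g : PowerSeries K) : ℕ :=
  adicOrder (tId K) g

/-- The family of ideals `I_l` of the graded algebra `G = ⊕ I_l W^l`. -/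
def idealFam {R : Type*} [CommRing R] (G : Subalgebra R (Polynomial R)) (l : ℕ) : Ideal R :=
  Submodule.comap (Polynomial.monomial l : R →ₗ[R] Polynomial R) (Subalgebra.toSubmodule G)

/-- The closed point of the local ring `(R, m)` belongs to the singular locus of
`G = ⊕ I_l W^l`, i.e. `ν(I_l) ≥ l` for all `l ≥ 1`. -/
def SingFam {R : Type*} [CommRing R] (m : Ideal R) (I : ℕ → Ideal R) : Prop :=
  ∀ l : ℕ, 1 ≤ l → I l ≤ m ^ l

/-- The transform `⊕ (I_l · T^{-l}) W^l` of a Rees algebra `⊕ I_l W^l` over a DVR with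
uniformizer `T` (when the closed point lies in the singular locus, `I_l ⊆ (T^l)` and
`I_l · T^{-l} = (I_l : (T^l))`). -/
def transformFam {R : Type*} [CommRing R] (T : R) (I : ℕ → Ideal R) : ℕ → Ideal R :=
  fun l => (I l).colon (Ideal.span {T ^ l})

/-- The persistance: the least number `κ` of transforms needed so that the closed point no
longer lies in the singular locus. -/
def persist {R : Type*} [CommRing R] (m : Ideal R) (T : R)
    (G : Subalgebra R (Polynomial R)) : ℕ :=
  sInf {κ : ℕ | ¬ SingFam m ((transformFam T)^[κ] (idealFam G))}

/-- The set of elements of a ring integral over a subset `s` (monic equation with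
coefficients in `s`). -/
def intClos {A : Type*} [CommRing A] (s : Set A) : Set A :=
  {p : A | ∃ q : Polynomial A, q.Monic ∧ (∀ n, q.coeff n ∈ s) ∧ Polynomial.eval p q = 0}


/-- The monic polynomial `f = x^b + B_{b-2} x^{b-2} + ⋯ + B_1 x + B_0` with coefficients
`B_j = Bc j` (only `j ≤ b - 2` is relevant). -/
def minPolyOf {S : Type*} [CommRing S] (b : ℕ) (Bc : ℕ → S) : Polynomial S :=
  Polynomial.X ^ b + ∑ j ∈ Finset.range (b - 1), Polynomial.C (Bc j) * Polynomial.X ^ j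


/-- The maximal ideal `(z_1, …, z_d)` of the polynomial ring `k[z_1, …, z_d]`
(the kernel of evaluation at the origin). -/
def mPoly (k : Type) [Field k] (d : ℕ) : Ideal (MvPolynomial (Fin d) k) :=
  RingHom.ker (MvPolynomial.aeval (fun _ => (0 : k)) : MvPolynomial (Fin d) k →ₐ[k] k)

instance {k : Type} [Field k] {d : ℕ} : (mPoly k d).IsMaximal :=
  RingHom.ker_isMaximal_of_surjective _ (fun a => ⟨MvPolynomial.C a, by simp⟩)

instance {k : Type} [Field k] {d : ℕ} : (mPoly k d).IsPrime :=
  (inferInstance : (mPoly k d).IsMaximal).isPrime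

/-- `IsSLoc k d S` says that `S` is (identified with) the localization of `k[z_1, …, z_d]`
at the maximal ideal `(z_1, …, z_d)`. -/
abbrev IsSLoc (k : Type) [Field k] (d : ℕ) (S : Type) [CommRing S]
    [Algebra (MvPolynomial (Fin d) k) S] : Prop :=
  IsLocalization.AtPrime S (mPoly k d)

/-- The element `z_j` of `S`. -/
def zvar (k : Type) [Field k] (d : ℕ) (S : Type) [CommRing S]
    [Algebra (MvPolynomial (Fin d) k) S] (j : Fin d) : S :=
  algebraMap (MvPolynomial (Fin d) k) S (MvPolynomial.X j)

/-- The maximal ideal `m = (z_1, …, z_d)` of the local ring `S`. -/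
def mS (k : Type) [Field k] (d : ℕ) (S : Type) [CommRing S]
    [Algebra (MvPolynomial (Fin d) k) S] : Ideal S :=
  (mPoly k d).map (algebraMap (MvPolynomial (Fin d) k) S)


variable (k : Type) [Field k] (d : ℕ)
variable (S : Type) [CommRing S] [Algebra (MvPolynomial (Fin d) k) S] [Algebra k S]

/-- The elimination algebra `G_X^{(d)} = Diff(S[B_{b-2} W^2, …, B_0 W^b])` over `S` of the
hypersurface `X = V(f)`, where `f = x^b + B_{b-2} x^{b-2} + ⋯ + B_0`. -/
def hypElim (D : Fin d → Derivation k S S) (b : ℕ) (Bc : ℕ → S) :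
    Subalgebra S (Polynomial S) :=
  diffClosure D {p : Polynomial S | ∃ i ≤ b - 2,
    p = Polynomial.C (Bc i) * Polynomial.X ^ (b - i)}

/-- An arc in the hypersurface `X = V(f)` through the closed point `ξ`: a `k`-algebra
homomorphism `φ : S[x] → K⟦t⟧` with `φ(f) = 0` and `φ(x), φ(z_1), …, φ(z_d) ∈ (t)`,
with `φ(x)` and all `φ(z_j)` nonzero. -/
def IsHypArc (b : ℕ) (Bc : ℕ → S) {K : Type} [Field K] [Algebra k K]
    (φ : Polynomial S →ₐ[k] PowerSeries K) : Prop :=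
  φ (minPolyOf b Bc) = 0 ∧
  φ Polynomial.X ∈ tId K ∧ (∀ j, φ (Polynomial.C (zvar k d S j)) ∈ tId K) ∧
  φ Polynomial.X ≠ 0 ∧ (∀ j, φ (Polynomial.C (zvar k d S j)) ≠ 0)

/-- The order of the arc `φ`: `ord(φ) = min {α_0, α_1, …, α_d}`, where
`α_0 = ord_t φ(x)` and `α_j = ord_t φ(z_j)`. -/
def hypArcOrd {K : Type} [Field K] [Algebra k K]
    (φ : Polynomial S →ₐ[k] PowerSeries K) : ℕ :=
  sInf (insert (tOrd (φ Polynomial.X))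
    (Set.range fun j => tOrd (φ (Polynomial.C (zvar k d S j)))))

/-- The contact algebra `G^{(1)}_{X_0,φ}`: the Rees algebra over `K⟦t⟧` generated by
`t^{α_0} W` together with all `φ(g) W^l`, for `g W^l` a homogeneous element of `G_X^{(d)}`
with `φ(g) ≠ 0`. -/
def hypContact (D : Fin d → Derivation k S S) (b : ℕ) (Bc : ℕ → S)
    {K : Type} [Field K] [Algebra k K] (φ : Polynomial S →ₐ[k] PowerSeries K) :
    Subalgebra (PowerSeries K) (Polynomial (PowerSeries K)) :=
  Algebra.adjoin (PowerSeries K)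
    (insert
      (Polynomial.C ((PowerSeries.X : PowerSeries K) ^ tOrd (φ Polynomial.X)) * Polynomial.X)
      {p : Polynomial (PowerSeries K) | ∃ (g : S) (l : ℕ),
        (Polynomial.C g * Polynomial.X ^ l : Polynomial S) ∈ hypElim k d S D b Bc ∧
        φ (Polynomial.C g) ≠ 0 ∧
        p = Polynomial.C (φ (Polynomial.C g)) * Polynomial.X ^ l})


/-!
Write `G` for the elimination algebra, `α = ord_t φ(x)` and `L = min_j ord_t φ(z_j)`; the hypothesis
on `ord(φ)` says `α ≤ L`. The Rees algebra of the ideal `m` is differentially closed, hence contains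
`G`, and `φ(m) ⊆ (t^L)`, so the image of `G` over `K⟦t⟧` has order at least `L`. Conversely,
`φ(f) = 0` forces `ord_t φ(B_i) ≤ α (b - i)` for some `i`: otherwise `φ(x)^b`, of order `α b`, would
be minus a sum of terms of strictly larger order. So the image of `G` has order at most `α`.
Therefore `α = L` and this order is `L`; adding `t^α W` does not change it, and genericity reads
`L = L · ord(G)`.
-/

section AdicOrder

variable {R : Type*} [CommRing R] (m : Ideal R)

theorem le_adicOrder_iff [IsHausdorff m R] {f : R} (hf : f ≠ 0) (n : ℕ) :
    n ≤ adicOrder m f ↔ f ∈ m ^ n := by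
  have hbdd : BddAbove {n : ℕ | f ∈ m ^ n} := by
    by_contra hunbdd
    refine hf (IsHausdorff.haus ‹IsHausdorff m R› f fun n => ?_)
    obtain ⟨l, hl, hnl⟩ := not_bddAbove_iff.1 hunbdd n
    rw [SModEq.zero, smul_eq_mul, Ideal.mul_top]
    exact Ideal.pow_le_pow_right hnl.le hl
  have hzero : f ∈ m ^ 0 := by simp only [pow_zero, Ideal.one_eq_top, Submodule.mem_top]
  exact ⟨fun h => Ideal.pow_le_pow_right h (Nat.sSup_mem ⟨0, hzero⟩ hbdd),
    fun h => le_csSup hbdd h⟩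

theorem adicOrder_unit_mul {u : R} (hu : IsUnit u) (f : R) :
    adicOrder m (u * f) = adicOrder m f := by
  simp only [adicOrder, Ideal.unit_mul_mem_iff_mem _ hu]

end AdicOrder

section ReesAlgebra

variable {R : Type*} [CommRing R] {m : Ideal R}

theorem C_mul_X_pow_mem_reesAlgebra_iff {f : R} {n : ℕ} :
    (C f * X ^ n : R[X]) ∈ reesAlgebra m ↔ f ∈ m ^ n := by
  rw [C_mul_X_pow_eq_monomial, reesAlgebra.monomial_mem]

theorem graded_reesAlgebra : Graded (reesAlgebra m) := fun p hp n =>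
  C_mul_X_pow_mem_reesAlgebra_iff.2 ((mem_reesAlgebra_iff m p).1 hp n)

theorem derivation_apply_mem_pow {k : Type*} [CommRing k] [Algebra k R] (D : Derivation k R R)
    {l : ℕ} {f : R} (hf : f ∈ m ^ (l + 1)) : D f ∈ m ^ l := by
  induction l generalizing f with
  | zero => simp only [pow_zero, Ideal.one_eq_top, Submodule.mem_top]
  | succ l ih =>
    rw [pow_succ] at hf
    induction hf using Submodule.mul_induction_on' with
    | mem_mul_mem x hx y hy =>
      rw [D.leibniz, smul_eq_mul, smul_eq_mul, pow_succ, mul_comm y]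
      exact add_mem (Ideal.mul_mem_right _ _ (by rwa [← pow_succ])) (Ideal.mul_mem_mul (ih hx) hy)
    | add x _ y _ hx hy => simpa only [map_add] using add_mem hx hy

theorem diffClosed_reesAlgebra {k ι : Type*} [CommRing k] [Algebra k R]
    (D : ι → Derivation k R R) : DiffClosed D (reesAlgebra m) := by
  simp only [DiffClosed, C_mul_X_pow_mem_reesAlgebra_iff]
  exact ⟨fun _ l _ hf => Ideal.pow_le_pow_right l.le_succ hf,
    fun _ _ j => derivation_apply_mem_pow (D j)⟩

theorem natCast_le_reesOrder [IsHausdorff m R] {c : ℕ} {G : Subalgebra R R[X]}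
    (hG : G ≤ reesAlgebra (m ^ c)) : (c : ℝ≥0∞) ≤ reesOrder m G := by
  refine le_sInf ?_
  rintro _ ⟨f, n, hf, hn, hfG, rfl⟩
  have hfm : c * n ≤ adicOrder m f := by
    rw [le_adicOrder_iff m hf, pow_mul]
    exact C_mul_X_pow_mem_reesAlgebra_iff.1 (hG hfG)
  rw [ENNReal.le_div_iff_mul_le (.inl (by exact_mod_cast Nat.one_le_iff_ne_zero.1 hn))
    (.inl (ENNReal.natCast_ne_top n))]
  exact_mod_cast hfm

theorem reesOrder_le_natCast {c n : ℕ} {G : Subalgebra R R[X]} {f : R} (hf : f ≠ 0) (hn : 1 ≤ n)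
    (hfG : C f * X ^ n ∈ G) (hfc : adicOrder m f ≤ c * n) : reesOrder m G ≤ c :=
  sInf_le_of_le ⟨f, n, hf, hn, hfG, rfl⟩ (ENNReal.div_le_of_le_mul (by exact_mod_cast hfc))

theorem reesOrder_anti : Antitone (reesOrder m) := fun _ _ hGH =>
  sInf_le_sInf fun _ ⟨f, n, hf, hn, hfG, hq⟩ => ⟨f, n, hf, hn, hGH hfG, hq⟩

theorem arcImage_le_reesAlgebra {A F : Type*} [CommRing A] [FunLike F R A] [RingHomClass F R A]
    {ψ : F} {J : Ideal A} (hψ : m.map ψ ≤ J) {G : Subalgebra R R[X]} (hG : G ≤ reesAlgebra m) :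
    arcImage ψ G ≤ reesAlgebra J := by
  refine Algebra.adjoin_le ?_
  rintro _ ⟨g, l, hg, -, rfl⟩
  refine C_mul_X_pow_mem_reesAlgebra_iff.2 (Ideal.pow_right_mono hψ l ?_)
  rw [← Ideal.map_pow]
  exact Ideal.mem_map_of_mem ψ (C_mul_X_pow_mem_reesAlgebra_iff.1 (hG hg))

end ReesAlgebra

section PowerSeries

variable {K : Type*} [CommRing K] {g : PowerSeries K}

theorem mem_tId_pow_iff {n : ℕ} : g ∈ tId K ^ n ↔ (n : ℕ∞) ≤ g.order := by
  rw [tId, Ideal.span_singleton_pow, Ideal.mem_span_singleton,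
    PowerSeries.order_eq_emultiplicity_X, pow_dvd_iff_le_emultiplicity]

instance : IsHausdorff (tId K) (PowerSeries K) where
  haus' g hg := by
    simp only [SModEq.zero, smul_eq_mul, Ideal.mul_top, mem_tId_pow_iff] at hg
    exact PowerSeries.order_eq_top.1 (ENat.eq_top_iff_forall_ge.2 hg)

theorem natCast_tOrd (hg : g ≠ 0) : (tOrd g : ℕ∞) = g.order :=
  ENat.eq_of_forall_natCast_le_iff fun n => by
    rw [Nat.cast_le, tOrd, le_adicOrder_iff _ hg, mem_tId_pow_iff]

end PowerSeries

theorem exists_le_sub_nsmul_of_pow_add_sum_eq_zero {A : Type*} [CommRing A]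
    (v : AddValuation A ℕ∞) {x : A} (hx : v x ≠ ⊤) {s : Finset ℕ} {b : ℕ} (hs : ∀ j ∈ s, j ≤ b)
    {c : ℕ → A} (h : x ^ b + ∑ j ∈ s, c j * x ^ j = 0) :
    ∃ j ∈ s, v (c j) ≤ (b - j) • v x := by
  by_contra! hlt
  have nsmul_ne_top (n : ℕ) : n • v x ≠ ⊤ := by
    rw [nsmul_eq_mul]
    exact WithTop.mul_ne_top (ENat.natCast_ne_top n) hx
  have hterm (j : ℕ) (hj : j ∈ s) : b • v x < v (c j * x ^ j) :=
    calc
      b • v x = (b - j) • v x + j • v x := by rw [← add_nsmul, Nat.sub_add_cancel (hs j hj)]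
      _ < v (c j) + j • v x := (ENat.add_lt_add_iff_right (nsmul_ne_top j)).2 (hlt j hj)
      _ = v (c j * x ^ j) := by rw [v.map_mul, v.map_pow]
  have hsum : b • v x < v (∑ j ∈ s, c j * x ^ j) := v.map_lt_sum (nsmul_ne_top b) hterm
  rw [← v.map_pow, eq_neg_of_add_eq_zero_left h, v.map_neg] at hsum
  exact hsum.false

section MaximalIdeal

variable {k : Type} [Field k] {d : ℕ} {S : Type} [CommRing S] [Algebra (MvPolynomial (Fin d) k) S]

theorem mPoly_eq_idealOfVars : mPoly k d = MvPolynomial.idealOfVars (Fin d) k := by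
  ext p
  rw [← pow_one (MvPolynomial.idealOfVars _ _), MvPolynomial.mem_pow_idealOfVars_iff']
  simp only [mPoly, RingHom.mem_ker, MvPolynomial.aeval_zero', MvPolynomial.constantCoeff_eq,
    Algebra.algebraMap_self, RingHom.id_apply, Nat.lt_one_iff, Finsupp.degree_eq_zero_iff,
    forall_eq]

theorem mS_eq_span : mS k d S = Ideal.span (Set.range (zvar k d S)) := by
  rw [mS, mPoly_eq_idealOfVars, Ideal.map_span, ← Set.range_comp]
  rfl

theorem map_mS_le_tId_pow {K F : Type*} [CommRing K] [FunLike F S (PowerSeries K)]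
    [RingHomClass F S (PowerSeries K)] {ψ : F} {L : ℕ} (hψ : ∀ j, ψ (zvar k d S j) ≠ 0)
    (hL : ∀ j, L ≤ tOrd (ψ (zvar k d S j))) : (mS k d S).map ψ ≤ tId K ^ L := by
  rw [mS_eq_span, Ideal.map_span, Ideal.span_le, ← Set.range_comp, Set.range_subset_iff]
  exact fun j => (le_adicOrder_iff _ (hψ j) L).1 (hL j)

end MaximalIdeal

section Hypersurface

variable {k : Type} [Field k] {d : ℕ} {S : Type} [CommRing S] [Algebra k S]
  {D : Fin d → Derivation k S S} {b : ℕ} {Bc : ℕ → S}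

theorem C_mul_X_pow_mem_hypElim {i : ℕ} (hi : i ≤ b - 2) :
    C (Bc i) * X ^ (b - i) ∈ hypElim k d S D b Bc :=
  Algebra.mem_sInf.2 fun _ hG => hG.1 ⟨i, hi, rfl⟩

theorem hypElim_le_reesAlgebra {m : Ideal S} (hmem : ∀ i ≤ b - 2, Bc i ∈ m ^ (b - i)) :
    hypElim k d S D b Bc ≤ reesAlgebra m := by
  refine sInf_le ⟨?_, graded_reesAlgebra, diffClosed_reesAlgebra D⟩
  rintro _ ⟨i, hi, rfl⟩
  exact C_mul_X_pow_mem_reesAlgebra_iff.2 (hmem i hi)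

variable {K : Type} [Field K] [Algebra k K] {φ : S[X] →ₐ[k] PowerSeries K}

theorem hypContact_eq_sup : hypContact k d S D b Bc φ =
    Algebra.adjoin (PowerSeries K) {C (PowerSeries.X ^ tOrd (φ X)) * X} ⊔
      arcImage (φ.comp CAlgHom) (hypElim k d S D b Bc) := by
  rw [hypContact, Set.insert_eq, Algebra.adjoin_union]
  rfl

theorem hypContact_le_reesAlgebra {J : Ideal (PowerSeries K)}
    (hx : PowerSeries.X ^ tOrd (φ X) ∈ J)
    (hG : arcImage (φ.comp CAlgHom) (hypElim k d S D b Bc) ≤ reesAlgebra J) :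
    hypContact k d S D b Bc φ ≤ reesAlgebra J := by
  rw [hypContact_eq_sup]
  refine sup_le (Algebra.adjoin_singleton_le ?_) hG
  have hx' := (C_mul_X_pow_mem_reesAlgebra_iff (n := 1)).2 ((pow_one J).symm ▸ hx)
  rwa [pow_one] at hx'

theorem reesOrder_hypContact_le : reesOrder (tId K) (hypContact k d S D b Bc φ) ≤
    reesOrder (tId K) (arcImage (φ.comp CAlgHom) (hypElim k d S D b Bc)) :=
  reesOrder_anti (le_sup_right.trans_eq hypContact_eq_sup.symm)

theorem exists_tOrd_coeff_le (hf : φ (minPolyOf b Bc) = 0) (hx : φ X ≠ 0) :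
    ∃ i < b - 1, φ (C (Bc i)) ≠ 0 ∧ tOrd (φ (C (Bc i))) ≤ tOrd (φ X) * (b - i) := by
  let v := multiplicity_addValuation (PowerSeries.X_prime (R := K))
  have hv (g : PowerSeries K) : v g = g.order := (PowerSeries.order_eq_emultiplicity_X g).symm
  simp only [minPolyOf, map_add, map_sum, map_mul, map_pow] at hf
  obtain ⟨i, hi, hle⟩ := exists_le_sub_nsmul_of_pow_add_sum_eq_zero v
    (by simpa [hv] using hx) (fun j hj => by rw [Finset.mem_range] at hj; omega) hf
  rw [hv, hv, ← natCast_tOrd hx] at hle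
  have hBi : φ (C (Bc i)) ≠ 0 := by
    intro h0
    rw [h0, PowerSeries.order_zero, nsmul_eq_mul, top_le_iff, ← Nat.cast_mul] at hle
    exact ENat.natCast_ne_top _ hle
  refine ⟨i, Finset.mem_range.1 hi, hBi, ?_⟩
  rw [← natCast_tOrd hBi, nsmul_eq_mul, mul_comm] at hle
  exact_mod_cast hle

theorem reesOrder_arcImage_hypElim_le (hf : φ (minPolyOf b Bc) = 0) (hx : φ X ≠ 0) :
    reesOrder (tId K) (arcImage (φ.comp CAlgHom) (hypElim k d S D b Bc)) ≤ tOrd (φ X) := by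
  obtain ⟨i, hi, hBi, hle⟩ := exists_tOrd_coeff_le hf hx
  have hmem : C (Bc i) * X ^ (b - i) ∈ hypElim k d S D b Bc := C_mul_X_pow_mem_hypElim (by omega)
  exact reesOrder_le_natCast hBi (by omega)
    (Algebra.subset_adjoin ⟨Bc i, b - i, hmem, hBi, rfl⟩) hle

end Hypersurface

theorem diagonal_generic_arc_with_small_x_order_general
    (k : Type) [Field k] (d : ℕ)
    (S : Type) [CommRing S] [Algebra (MvPolynomial (Fin d) k) S]
    [Algebra k S] [IsScalarTower k (MvPolynomial (Fin d) k) S]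
    (D : Fin d → Derivation k S S)
    (hD : ∀ i j : Fin d, D j (zvar k d S i) = if i = j then 1 else 0)
    (b : ℕ) (Bc : ℕ → S) (hmem : ∀ i ≤ b - 2, Bc i ∈ (mS k d S) ^ (b - i))
    (K : Type) [Field K] [Algebra k K]
    (φ : S[X] →ₐ[k] PowerSeries K) (hφ : IsHypArc k d S b Bc φ)
    (L : ℕ) (hL : IsLeast (Set.range fun j => tOrd (φ (C (zvar k d S j)))) L)
    (hgen : reesOrder (tId K) (arcImage (fun s : S => φ (C s)) (hypElim k d S D b Bc)) =
      (L : ℝ≥0∞) * reesOrder (mS k d S) (hypElim k d S D b Bc))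
    (hordx : hypArcOrd k d S φ = tOrd (φ X)) :
    reesOrder (tId K) (hypContact k d S D b Bc φ) / (hypArcOrd k d S φ : ℝ≥0∞) =
        reesOrder (mS k d S) (hypElim k d S D b Bc) ∧
      reesOrder (mS k d S) (hypElim k d S D b Bc) = 1 := by
  obtain ⟨hf, hxt, -, hx, hz⟩ := hφ
  have hαL : tOrd (φ X) ≤ L := hordx.symm.trans_le (Nat.sInf_le (Set.mem_insert_of_mem _ hL.1))
  have hmap : (mS k d S).map (φ.comp CAlgHom) ≤ tId K ^ L :=
    map_mS_le_tId_pow hz fun j => hL.2 ⟨j, rfl⟩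
  have himage : arcImage (φ.comp CAlgHom) (hypElim k d S D b Bc) ≤ reesAlgebra (tId K ^ L) :=
    arcImage_le_reesAlgebra hmap (hypElim_le_reesAlgebra hmem)
  have himage_le : reesOrder (tId K) (arcImage (φ.comp CAlgHom) (hypElim k d S D b Bc)) ≤
      tOrd (φ X) := reesOrder_arcImage_hypElim_le hf hx
  have hα : tOrd (φ X) = L :=
    hαL.antisymm (by exact_mod_cast (natCast_le_reesOrder himage).trans himage_le)
  have himage_ord : reesOrder (tId K) (arcImage (φ.comp CAlgHom) (hypElim k d S D b Bc)) = L :=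
    (himage_le.trans_eq (congrArg _ hα)).antisymm (natCast_le_reesOrder himage)
  have hxL : PowerSeries.X ^ tOrd (φ X) ∈ tId K ^ L :=
    hα ▸ Ideal.pow_mem_pow (Ideal.mem_span_singleton_self _) _
  have hcontact_ord : reesOrder (tId K) (hypContact k d S D b Bc φ) = L :=
    (reesOrder_hypContact_le.trans_eq himage_ord).antisymm
      (natCast_le_reesOrder (hypContact_le_reesAlgebra hxL himage))
  have hL0 : (L : ℝ≥0∞) ≠ 0 := by
    have hpos : 1 ≤ tOrd (φ X) := (le_adicOrder_iff _ hx 1).2 (by rwa [pow_one])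
    exact_mod_cast Nat.one_le_iff_ne_zero.1 (hpos.trans hαL)
  have hord : reesOrder (mS k d S) (hypElim k d S D b Bc) = 1 :=
    (ENNReal.mul_right_inj hL0 (ENNReal.natCast_ne_top L)).1
      (hgen.symm.trans (himage_ord.trans (mul_one _).symm))
  rw [hcontact_ord, hordx, hα, hord]
  exact ⟨ENNReal.div_self hL0 (ENNReal.natCast_ne_top L), rfl⟩

/-- (Lemma `lemma:tau_mayor`.)  Let `φ` be an arc in the hypersurface `X = V(f)` through
the closed point with `φ(z_j) = u_j g'(t)` for units `u_j` and `g'` of `t`-adic order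
`L ≥ 1`, whose projection `φ^{(d)}` to `S` is diagonal-generic for `G_X^{(d)}`, i.e.
`ord(G^{(1)}_{X_0,φ^{(d)}}) = L · ord(G_X^{(d)})`.  If `ord(φ) = ord_t(φ(x))`, then
`r_{X,φ}/ord(φ) = ord(G_X^{(d)}) = 1`. -/
theorem diagonal_generic_arc_with_small_x_order
    (k : Type) [Field k] [CharZero k] (d : ℕ) (hd : 1 ≤ d)
    (S : Type) [CommRing S] [IsDomain S] [Algebra (MvPolynomial (Fin d) k) S]
    [Algebra k S] [IsScalarTower k (MvPolynomial (Fin d) k) S] [IsSLoc k d S]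
    (D : Fin d → Derivation k S S)
    (hD : ∀ i j : Fin d, D j (zvar k d S i) = if i = j then 1 else 0)
    (b : ℕ) (hb : 2 ≤ b) (Bc : ℕ → S)
    (hmem : ∀ i ≤ b - 2, Bc i ∈ (mS k d S) ^ (b - i))
    (hnz : ∃ i ≤ b - 2, Bc i ≠ 0)
    (K : Type) [Field K] [Algebra k K]
    (φ : Polynomial S →ₐ[k] PowerSeries K) (hφ : IsHypArc k d S b Bc φ)
    (L : ℕ) (hL : 1 ≤ L) (g' : PowerSeries K) (hg0 : g' ≠ 0) (hgL : tOrd g' = L)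
    (u : Fin d → PowerSeries K) (hu : ∀ j, IsUnit (u j))
    (hφz : ∀ j, φ (Polynomial.C (zvar k d S j)) = u j * g')
    (hgen : reesOrder (tId K)
        (arcImage (fun s : S => φ (Polynomial.C s)) (hypElim k d S D b Bc)) =
      (L : ℝ≥0∞) * reesOrder (mS k d S) (hypElim k d S D b Bc))
    (hordx : hypArcOrd k d S φ = tOrd (φ (Polynomial.X : Polynomial S))) :
    reesOrder (tId K) (hypContact k d S D b Bc φ) / (hypArcOrd k d S φ : ℝ≥0∞) =
        reesOrder (mS k d S) (hypElim k d S D b Bc) ∧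
      reesOrder (mS k d S) (hypElim k d S D b Bc) = 1 := by
  have hz (j : Fin d) : tOrd (φ (C (zvar k d S j))) = L := by
    rw [hφz, tOrd, adicOrder_unit_mul _ (hu j), ← hgL, tOrd]
  exact diagonal_generic_arc_with_small_x_order_general k d S D hD b Bc hmem K φ hφ L
    ⟨⟨⟨0, hd⟩, hz _⟩, Set.forall_mem_range.2 fun j => (hz j).ge⟩ hgen hordx

end NashMult
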